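/- Inverse Function Theorem in finite dimensions (C¹ case): Let 𝕜 be a complete valued field, E a finite-dimensional normed 𝕜-vector space, U ⊆ E open, and f : U → E a C¹ map with witnessing continuous map f^{[1]} : U^{[1]} → E. Suppose x ∈ U is such that there is a bicontinuous 𝕜-linear automorphism A of E with A(y) = f^{[1]}(x,y,0) for all y ∈ E. Then there exists an open neighbourhood V ⊆ U of x such that f(V) is open in E, f is injective on V, and the inverse map g : f(V) → E of f|_V is a C¹ map on the open set f(V). -/

import Mathlib

open Set Metric Filter Topology

/-- For an open set `U ⊆ E`, the extended domain
`U^{[1]} = {(x,y,t) : x ∈ U, x + t·y ∈ U}` of the difference quotient map. -/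
def UOne (𝕜 : Type*) {E : Type*} [Field 𝕜] [AddCommGroup E] [Module 𝕜 E]
    (U : Set E) : Set (E × E × 𝕜) :=
  {p | p.1 ∈ U ∧ p.1 + p.2.2 • p.2.1 ∈ U}

/-- `g : U^{[1]} → F` extends the directional difference quotients of `f`:
`g (x,y,t) = t⁻¹ • (f (x + t·y) - f x)` whenever `t ≠ 0`. -/
def IsDiffQuotOn (𝕜 : Type*) {E F : Type*} [Field 𝕜] [AddCommGroup E] [Module 𝕜 E]
    [AddCommGroup F] [Module 𝕜 F] (U : Set E) (f : E → F) (g : E × E × 𝕜 → F) : Prop :=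
  ∀ p ∈ UOne 𝕜 U, p.2.2 ≠ 0 → g p = (p.2.2)⁻¹ • (f (p.1 + p.2.2 • p.2.1) - f p.1)

/-- `f` is `C¹` on the open set `U` in the sense of extended difference quotients:
`f` is continuous on `U` and there is a continuous map `f^{[1]} : U^{[1]} → F`
extending the directional difference quotients of `f`. -/
def IsC1On (𝕜 : Type*) {E F : Type*} [Field 𝕜] [TopologicalSpace 𝕜]
    [AddCommGroup E] [Module 𝕜 E] [TopologicalSpace E]
    [AddCommGroup F] [Module 𝕜 F] [TopologicalSpace F]
    (U : Set E) (f : E → F) : Prop :=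
  ContinuousOn f U ∧
    ∃ g : E × E × 𝕜 → F, ContinuousOn g (UOne 𝕜 U) ∧ IsDiffQuotOn 𝕜 U f g

/-- `f` is `C²` on the open set `U`: it is `C¹` with a witness `f^{[1]}` which is
itself `C¹` on the open set `U^{[1]}`. -/
def IsC2On (𝕜 : Type*) {E F : Type*} [Field 𝕜] [TopologicalSpace 𝕜]
    [AddCommGroup E] [Module 𝕜 E] [TopologicalSpace E]
    [AddCommGroup F] [Module 𝕜 F] [TopologicalSpace F]
    (U : Set E) (f : E → F) : Prop :=
  ContinuousOn f U ∧
    ∃ g : E × E × 𝕜 → F, ContinuousOn g (UOne 𝕜 U) ∧ IsDiffQuotOn 𝕜 U f g ∧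
      IsC1On 𝕜 (UOne 𝕜 U) g

/-!
The point is to replace `f^{[1]}` by strict differentiability. If `f` is `C¹` and `E` has a finite
basis, an increment of `f` telescopes into increments along the basis vectors, each of which is
`f^{[1]}` at a point close to `(x, eᵢ, 0)`, times a coordinate; so `f` is strictly differentiable,
with derivative `f^{[1]}(x, ·, 0)`, which depends continuously on `x`. The strict inverse function
theorem then gives a local inverse that is again strictly differentiable at every point. Conversely
a strictly differentiable map is `C¹`, because strict differentiability implies that the
difference quotient, defined on the dense set `t ≠ 0`, has a limit at each point with `t = 0`.
-/

open Asymptotics Module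

section Basic

variable {𝕜 E : Type*} [Field 𝕜] [AddCommGroup E] [Module 𝕜 E] {U : Set E}

theorem mk_zero_mem_uOne {x v : E} : (x, v, (0 : 𝕜)) ∈ UOne 𝕜 U ↔ x ∈ U := by
  simp [UOne]

theorem isOpen_uOne [TopologicalSpace 𝕜] [TopologicalSpace E] [ContinuousAdd E]
    [ContinuousSMul 𝕜 E] (hU : IsOpen U) : IsOpen (UOne 𝕜 U) :=
  (hU.preimage continuous_fst).inter <|
    hU.preimage (f := fun p : E × E × 𝕜 ↦ p.1 + p.2.2 • p.2.1) (by fun_prop)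

theorem IsDiffQuotOn.smul_apply {F : Type*} [AddCommGroup F] [Module 𝕜 F] {f : E → F}
    {g : E × E × 𝕜 → F} (hg : IsDiffQuotOn 𝕜 U f g) {p : E × E × 𝕜} (hp : p ∈ UOne 𝕜 U) :
    p.2.2 • g p = f (p.1 + p.2.2 • p.2.1) - f p.1 := by
  by_cases ht : p.2.2 = 0
  · simp [ht]
  · rw [hg p hp ht, smul_inv_smul₀ ht]

end Basic

namespace IsDiffQuotOn

section Increments

variable {𝕜 E F α : Type*} [NormedField 𝕜] [AddCommGroup E] [Module 𝕜 E] [TopologicalSpace E]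
  [ContinuousAdd E] [ContinuousSMul 𝕜 E] [NormedAddCommGroup F] [NormedSpace 𝕜 F]
  {U : Set E} {f : E → F} {g : E × E × 𝕜 → F} {x : E} {l : Filter α} {z : α → E}

theorem isLittleO_sub_sub (hU : IsOpen U) (hgc : ContinuousOn g (UOne 𝕜 U))
    (hg : IsDiffQuotOn 𝕜 U f g) (hx : x ∈ U) (v : E) {t : α → 𝕜}
    (hz : Tendsto z l (𝓝 x)) (ht : Tendsto t l (𝓝 0)) :
    (fun a ↦ f (z a + t a • v) - f (z a) - t a • g (x, v, 0)) =o[l] t := by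
  have hnhds : UOne 𝕜 U ∈ 𝓝 (x, v, (0 : 𝕜)) :=
    (isOpen_uOne hU).mem_nhds (mk_zero_mem_uOne.2 hx)
  have hp : Tendsto (fun a ↦ (z a, v, t a)) l (𝓝 (x, v, 0)) :=
    hz.prodMk_nhds (tendsto_const_nhds.prodMk_nhds ht)
  have hlim : Tendsto (fun a ↦ g (z a, v, t a) - g (x, v, 0)) l (𝓝 0) :=
    tendsto_sub_nhds_zero_iff.2 ((hgc.continuousAt hnhds).tendsto.comp hp)
  have hsmul : (fun a ↦ t a • (g (z a, v, t a) - g (x, v, 0))) =o[l] t := by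
    simpa using (isBigO_refl t l).smul_isLittleO ((isLittleO_one_iff 𝕜).2 hlim)
  refine hsmul.congr' ?_ EventuallyEq.rfl
  filter_upwards [hp hnhds] with a ha
  rw [smul_sub, hg.smul_apply ha]

theorem isLittleO_sub_sub_sum {ι G : Type*} [SeminormedAddCommGroup G] (hU : IsOpen U)
    (hgc : ContinuousOn g (UOne 𝕜 U)) (hg : IsDiffQuotOn 𝕜 U f g) (hx : x ∈ U) (v : ι → E)
    {t : ι → α → 𝕜} {r : α → G} (s : Finset ι) (hz : Tendsto z l (𝓝 x))
    (ht : ∀ i ∈ s, Tendsto (t i) l (𝓝 0)) (htr : ∀ i ∈ s, t i =O[l] r) :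
    (fun a ↦ f (z a + ∑ i ∈ s, t i a • v i) - f (z a) - ∑ i ∈ s, t i a • g (x, v i, 0))
      =o[l] r := by
  induction s using Finset.cons_induction with
  | empty => simpa using isLittleO_zero r l
  | cons j s hj ih =>
    simp only [Finset.forall_mem_cons] at ht htr
    have hzs : Tendsto (fun a ↦ z a + ∑ i ∈ s, t i a • v i) l (𝓝 x) := by
      simpa using hz.add (tendsto_finsetSum s fun i hi ↦ (ht.2 i hi).smul_const (v i))
    have hstep := (hg.isLittleO_sub_sub hU hgc hx (v j) hzs ht.1).trans_isBigO htr.1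
    refine ((ih ht.2 htr.2).add hstep).congr_left fun a ↦ ?_
    rw [Finset.sum_cons, Finset.sum_cons, add_comm (t j a • v j), ← add_assoc]
    abel

end Increments

section Derivative

variable {𝕜 E F : Type*} [NontriviallyNormedField 𝕜] [NormedAddCommGroup E] [NormedSpace 𝕜 E]
  [NormedAddCommGroup F] [NormedSpace 𝕜 F] {U : Set E} {f : E → F} {g : E × E × 𝕜 → F} {x : E}

theorem hasLineDerivAt (hU : IsOpen U) (hgc : ContinuousOn g (UOne 𝕜 U))
    (hg : IsDiffQuotOn 𝕜 U f g) (hx : x ∈ U) (v : E) :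
    HasLineDerivAt 𝕜 f (g (x, v, 0)) x v :=
  hasLineDerivAt_iff_isLittleO_nhds_zero.2 <|
    hg.isLittleO_sub_sub hU hgc hx v tendsto_const_nhds tendsto_id

variable [CompleteSpace 𝕜]

theorem hasStrictFDerivAt_constrL {ι : Type*} [Finite ι] (hU : IsOpen U)
    (hgc : ContinuousOn g (UOne 𝕜 U)) (hg : IsDiffQuotOn 𝕜 U f g) (hx : x ∈ U)
    (b : Basis ι 𝕜 E) : HasStrictFDerivAt f (b.constrL fun i ↦ g (x, b i, 0)) x := by
  cases nonempty_fintype ι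
  let coord (i : ι) : E →L[𝕜] 𝕜 := (ContinuousLinearMap.proj i).comp (b.equivFunL : E →L[𝕜] ι → 𝕜)
  have hcoord (i : ι) : Tendsto (fun p : E × E ↦ coord i (p.1 - p.2)) (𝓝 (x, x)) (𝓝 0) :=
    Continuous.tendsto' (by fun_prop) _ _ (by simp)
  have hincr := hg.isLittleO_sub_sub_sum hU hgc hx b Finset.univ
    (continuous_snd.tendsto (x, x)) (fun i _ ↦ hcoord i)
    fun i _ ↦ (coord i).isBigO_comp (fun p : E × E ↦ p.1 - p.2) _
  refine .of_isLittleO (hincr.congr_left fun p ↦ ?_)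
  have hsum : ∑ i, coord i (p.1 - p.2) • b i = p.1 - p.2 := b.sum_equivFun (p.1 - p.2)
  rw [hsum, add_sub_cancel, Basis.constrL_apply]
  rfl

variable [FiniteDimensional 𝕜 E]

theorem hasStrictFDerivAt (hU : IsOpen U) (hgc : ContinuousOn g (UOne 𝕜 U))
    (hg : IsDiffQuotOn 𝕜 U f g) (hx : x ∈ U) : HasStrictFDerivAt f (fderiv 𝕜 f x) x := by
  have h := hg.hasStrictFDerivAt_constrL hU hgc hx (finBasis 𝕜 E)
  rwa [h.hasFDerivAt.fderiv]

theorem fderiv_apply (hU : IsOpen U) (hgc : ContinuousOn g (UOne 𝕜 U))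
    (hg : IsDiffQuotOn 𝕜 U f g) (hx : x ∈ U) (v : E) : fderiv 𝕜 f x v = g (x, v, 0) :=
  ((hg.hasStrictFDerivAt hU hgc hx).hasFDerivAt.hasLineDerivAt v).unique
    (hg.hasLineDerivAt hU hgc hx v)

theorem continuousOn_fderiv (hU : IsOpen U) (hgc : ContinuousOn g (UOne 𝕜 U))
    (hg : IsDiffQuotOn 𝕜 U f g) : ContinuousOn (fderiv 𝕜 f) U := by
  refine continuousOn_clm_apply.2 fun v ↦ ?_
  have hgv : ContinuousOn (fun y ↦ g (y, v, (0 : 𝕜))) U :=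
    hgc.comp (f := fun y ↦ (y, v, (0 : 𝕜))) (by fun_prop) fun y hy ↦ mk_zero_mem_uOne.2 hy
  exact hgv.congr fun y hy ↦ hg.fderiv_apply hU hgc hy v

end Derivative

end IsDiffQuotOn

section StrictDerivative

variable {𝕜 E F : Type*} [NontriviallyNormedField 𝕜] [NormedAddCommGroup E] [NormedSpace 𝕜 E]
  [NormedAddCommGroup F] [NormedSpace 𝕜 F]

theorem tendsto_diffQuot_of_hasStrictFDerivAt {f : E → F} {f' : E →L[𝕜] F} {x : E}
    (hf : HasStrictFDerivAt f f' x) (v : E) :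
    Tendsto (fun p : E × E × 𝕜 ↦ p.2.2⁻¹ • (f (p.1 + p.2.2 • p.2.1) - f p.1))
      (𝓝[{p | p.2.2 ≠ 0}] (x, v, 0)) (𝓝 (f' v)) := by
  set l := 𝓝[{p : E × E × 𝕜 | p.2.2 ≠ 0}] (x, v, 0)
  have hne : ∀ᶠ p in l, p.2.2 ≠ 0 := eventually_mem_nhdsWithin
  have hpair : Tendsto (fun p : E × E × 𝕜 ↦ (p.1 + p.2.2 • p.2.1, p.1)) l (𝓝 (x, x)) := by
    refine Tendsto.mono_left ?_ nhdsWithin_le_nhds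
    exact Continuous.tendsto' (by fun_prop) _ _ (by simp)
  have hdir : Tendsto (fun p : E × E × 𝕜 ↦ p.2.1) l (𝓝 v) :=
    Tendsto.mono_left (Continuous.tendsto' (by fun_prop) _ _ rfl) nhdsWithin_le_nhds
  have hincr : (fun p : E × E × 𝕜 ↦ f (p.1 + p.2.2 • p.2.1) - f p.1 - f' (p.2.2 • p.2.1))
      =o[l] fun p ↦ p.2.2 • p.2.1 := by
    simpa [Function.comp_def] using hf.isLittleO.comp_tendsto hpair
  have hquot : (fun p : E × E × 𝕜 ↦
      p.2.2⁻¹ • (f (p.1 + p.2.2 • p.2.1) - f p.1) - f' p.2.1) =o[l] fun p ↦ p.2.1 := by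
    refine ((isBigO_refl (fun p : E × E × 𝕜 ↦ p.2.2⁻¹) l).smul_isLittleO hincr).congr' ?_ ?_
    · filter_upwards [hne] with p hp
      rw [map_smul, smul_sub, inv_smul_smul₀ hp]
    · filter_upwards [hne] with p hp using inv_smul_smul₀ hp p.2.1
  have hzero := (isLittleO_one_iff ℝ).1 (hquot.trans_isBigO (hdir.isBigO_one ℝ))
  simpa using hzero.add ((f'.continuous.tendsto v).comp hdir)

theorem isC1On_of_forall_hasStrictFDerivAt {U : Set E} {f : E → F}
    (hf : ∀ x ∈ U, ∃ f' : E →L[𝕜] F, HasStrictFDerivAt f f' x) : IsC1On 𝕜 U f := by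
  have hfc : ∀ x ∈ U, ContinuousAt f x := fun x hx ↦ (hf x hx).elim fun _ h ↦ h.continuousAt
  let q : E × E × 𝕜 → F := fun p ↦ p.2.2⁻¹ • (f (p.1 + p.2.2 • p.2.1) - f p.1)
  let S : Set (E × E × 𝕜) := {p | p.2.2 ≠ 0}
  have hS : Dense S :=
    (dense_compl_singleton (0 : 𝕜)).preimage (isOpenMap_snd.comp isOpenMap_snd)
  have hq : ∀ p ∈ UOne 𝕜 U, p.2.2 ≠ 0 → Tendsto q (𝓝[S] p) (𝓝 (q p)) := by
    intro p hp ht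
    have hinv : ContinuousAt (fun p : E × E × 𝕜 ↦ p.2.2⁻¹) p := .inv₀ (by fun_prop) ht
    have hshift : ContinuousAt (fun p : E × E × 𝕜 ↦ f (p.1 + p.2.2 • p.2.1)) p :=
      (hfc _ hp.2).comp (f := fun p : E × E × 𝕜 ↦ p.1 + p.2.2 • p.2.1) (by fun_prop)
    have hbase : ContinuousAt (fun p : E × E × 𝕜 ↦ f p.1) p :=
      (hfc _ hp.1).comp continuousAt_fst
    exact (hinv.smul (hshift.sub hbase)).tendsto.mono_left nhdsWithin_le_nhds
  refine ⟨fun x hx ↦ (hfc x hx).continuousWithinAt, extendFrom S q, ?_, ?_⟩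
  · refine continuousOn_extendFrom (fun p _ ↦ hS p) ?_
    rintro ⟨x, v, t⟩ hp
    obtain rfl | ht := eq_or_ne t 0
    · obtain ⟨f', hf'⟩ := hf x hp.1
      exact ⟨f' v, tendsto_diffQuot_of_hasStrictFDerivAt hf' v⟩
    · exact ⟨_, hq _ hp ht⟩
  · exact fun p hp ht ↦ extendFrom_eq (hS p) (hq p hp ht)

theorem exists_openPartialHomeomorph_isC1On_symm [CompleteSpace E] {U : Set E} (hU : IsOpen U)
    {f : E → F} {f' : E → E →L[𝕜] F} (hf : ∀ y ∈ U, HasStrictFDerivAt f (f' y) y)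
    {x : E} (hx : x ∈ U) (hf' : ContinuousAt f' x) (A : E ≃L[𝕜] F) (hA : f' x = A) :
    ∃ Φ : OpenPartialHomeomorph E F, ⇑Φ = f ∧ x ∈ Φ.source ∧ Φ.source ⊆ U ∧
      IsC1On 𝕜 Φ.target Φ.symm := by
  let S : Set E := U ∩ f' ⁻¹' range ((↑) : (E ≃L[𝕜] F) → E →L[𝕜] F)
  have hxS : x ∈ interior S :=
    mem_interior_iff_mem_nhds.2 (inter_mem (hU.mem_nhds hx) (hf' (hA ▸ A.nhds)))
  have hfx : HasStrictFDerivAt f (A : E →L[𝕜] F) x := hA ▸ hf x hx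
  let Φ := (hfx.toOpenPartialHomeomorph f).restr S
  have hΦS : Φ.source ⊆ S := inter_subset_right.trans interior_subset
  refine ⟨Φ, rfl, ⟨hfx.mem_toOpenPartialHomeomorph_source, hxS⟩, fun y hy ↦ (hΦS hy).1, ?_⟩
  refine isC1On_of_forall_hasStrictFDerivAt fun w hw ↦ ?_
  obtain ⟨hwU, B, hB⟩ := hΦS (Φ.map_target hw)
  exact ⟨B.symm, Φ.hasStrictFDerivAt_symm hw (hB ▸ hf _ hwU)⟩

end StrictDerivative

theorem inverse_function_theorem_finite_dimensional_C1_general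
    {𝕜 : Type*} [NontriviallyNormedField 𝕜] [CompleteSpace 𝕜]
    {E : Type*} [NormedAddCommGroup E] [NormedSpace 𝕜 E] [FiniteDimensional 𝕜 E]
    {F : Type*} [NormedAddCommGroup F] [NormedSpace 𝕜 F]
    {U : Set E} (hU : IsOpen U) (f : E → F) (g : E × E × 𝕜 → F)
    (hgc : ContinuousOn g (UOne 𝕜 U)) (hgq : IsDiffQuotOn 𝕜 U f g)
    {x : E} (hx : x ∈ U) (A : E ≃L[𝕜] F) (hA : ∀ y : E, A y = g (x, y, (0 : 𝕜))) :
    ∃ V : Set E, IsOpen V ∧ V ⊆ U ∧ x ∈ V ∧ IsOpen (f '' V) ∧ InjOn f V ∧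
      ∃ ginv : F → E, (∀ y ∈ V, ginv (f y) = y) ∧
        (∀ z ∈ f '' V, ginv z ∈ V ∧ f (ginv z) = z) ∧
        IsC1On 𝕜 (f '' V) ginv := by
  have : CompleteSpace E := FiniteDimensional.complete 𝕜 E
  have hfA : fderiv 𝕜 f x = A := by
    ext y
    exact (hgq.fderiv_apply hU hgc hx y).trans (hA y).symm
  obtain ⟨Φ, rfl, hxΦ, hΦU, hC1⟩ := exists_openPartialHomeomorph_isC1On_symm hU
    (fun y hy ↦ hgq.hasStrictFDerivAt hU hgc hy) hx
    ((hgq.continuousOn_fderiv hU hgc).continuousAt (hU.mem_nhds hx)) A hfA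
  refine ⟨Φ.source, Φ.open_source, hΦU, hxΦ, ?_⟩
  rw [Φ.image_source_eq_target]
  exact ⟨Φ.open_target, Φ.injOn, Φ.symm, fun y ↦ Φ.left_inv,
    fun w hw ↦ ⟨Φ.map_target hw, Φ.right_inv hw⟩, hC1⟩

/-- **Inverse Function Theorem in finite dimensions (C¹ case).**  Let `𝕜` be a
complete valued field, `E` a finite-dimensional normed `𝕜`-vector space, `U ⊆ E`
open, and `f : U → E` a `C¹` map with witnessing continuous map `g = f^{[1]}`.  If
`x ∈ U` and `y ↦ g (x, y, 0)` is a bicontinuous linear automorphism `A` of `E`, then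
there is an open neighbourhood `V ⊆ U` of `x` such that `f (V)` is open, `f` is
injective on `V`, and the inverse map `f (V) → V` is `C¹`. -/
theorem inverse_function_theorem_finite_dimensional_C1
    {𝕜 : Type*} [NontriviallyNormedField 𝕜] [CompleteSpace 𝕜]
    {E : Type*} [NormedAddCommGroup E] [NormedSpace 𝕜 E] [FiniteDimensional 𝕜 E]
    {U : Set E} (hU : IsOpen U)
    (f : E → E) (hfc : ContinuousOn f U)
    (g : E × E × 𝕜 → E)
    (hgc : ContinuousOn g (UOne 𝕜 U)) (hgq : IsDiffQuotOn 𝕜 U f g)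
    {x : E} (hx : x ∈ U)
    (A : E ≃L[𝕜] E) (hA : ∀ y : E, A y = g (x, y, (0 : 𝕜))) :
    ∃ V : Set E, IsOpen V ∧ V ⊆ U ∧ x ∈ V ∧ IsOpen (f '' V) ∧ InjOn f V ∧
      ∃ ginv : E → E, (∀ y ∈ V, ginv (f y) = y) ∧
        (∀ z ∈ f '' V, ginv z ∈ V ∧ f (ginv z) = z) ∧
        IsC1On 𝕜 (f '' V) ginv :=
  inverse_function_theorem_finite_dimensional_C1_general hU f g hgc hgq hx A hA
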